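/- arXiv:1103.5519 — 2 statements merged into one kernel-verified Lean document; each statement's English description precedes it below -/
import Mathlib

section
/- There exists an odd unimodular lattice L in dimension 36 having minimum norm 3 with σ(L) = 20. -/
open scoped RealInnerProductSpace

noncomputable section

/-- The norm `(x, x)` of a vector `x ∈ ℝⁿ` (squared Euclidean length). -/
def normOf {n : ℕ} (x : EuclideanSpace ℝ (Fin n)) : ℝ := ⟪x, x⟫

/-- The dual `L* = {x ∈ ℝⁿ : (x,y) ∈ ℤ for all y ∈ L}` of a set of vectors. -/
def dualSet {n : ℕ} (L : Set (EuclideanSpace ℝ (Fin n))) : Set (EuclideanSpace ℝ (Fin n)) :=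
  {x | ∀ y ∈ L, ∃ m : ℤ, ⟪x, y⟫ = (m : ℝ)}

/-- `L` is a unimodular lattice: `L = L*`. -/
def IsUnimodularLattice {n : ℕ} (L : Set (EuclideanSpace ℝ (Fin n))) : Prop :=
  L = dualSet L

/-- `L` is odd: some vector of `L` has odd (integral) norm. -/
def IsOddLattice {n : ℕ} (L : Set (EuclideanSpace ℝ (Fin n))) : Prop :=
  ∃ x ∈ L, ∃ m : ℤ, Odd m ∧ normOf x = (m : ℝ)

/-- The even sublattice `L₀ = {x ∈ L : (x,x) even}`. -/
def evenSublattice {n : ℕ} (L : Set (EuclideanSpace ℝ (Fin n))) :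
    Set (EuclideanSpace ℝ (Fin n)) :=
  {x | x ∈ L ∧ ∃ m : ℤ, normOf x = 2 * (m : ℝ)}

/-- The shadow `S(L) = L₀* \ L`. -/
def shadow {n : ℕ} (L : Set (EuclideanSpace ℝ (Fin n))) : Set (EuclideanSpace ℝ (Fin n)) :=
  dualSet (evenSublattice L) \ L

/-- `L` has minimum norm `r`: `r` is the least norm among nonzero vectors of `L`. -/
def HasMinNorm {n : ℕ} (L : Set (EuclideanSpace ℝ (Fin n))) (r : ℝ) : Prop :=
  IsLeast {s : ℝ | ∃ x ∈ L, x ≠ 0 ∧ normOf x = s} r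

/-- The shadow `S(L)` has minimum norm `r`. -/
def HasShadowMinNorm {n : ℕ} (L : Set (EuclideanSpace ℝ (Fin n))) (r : ℝ) : Prop :=
  IsLeast {s : ℝ | ∃ x ∈ shadow L, normOf x = s} r

/-- `σ(L) = r`, i.e. `4 · min(S(L)) = r`. -/
def HasSigma {n : ℕ} (L : Set (EuclideanSpace ℝ (Fin n))) (r : ℝ) : Prop :=
  ∃ s : ℝ, HasShadowMinNorm L s ∧ r = 4 * s

/-- The number of vectors of norm `r` in `L`; when `L` has minimum norm `r`,
this is the kissing number of `L`. -/
def numVecsOfNorm {n : ℕ} (L : Set (EuclideanSpace ℝ (Fin n))) (r : ℝ) : ℕ :=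
  Set.ncard {x ∈ L | normOf x = r}

/-! The lattice arises by Construction A from a self-dual code over `ℤ/4`. Let the columns of `M`
be the coefficients of the 36 positive roots of `E₆` in the basis of simple roots. As `E₆` has
Coxeter number `12`, the identity `∑_{α > 0} (α, x) (α, y) = 12 (x, y)` gives `M * Mᵀ = 12 * A⁻¹`
with `A` the Cartan matrix, so that the rows of `M` are orthogonal modulo `4` and have norms
divisible by `8`. Hence they generate, together with twice the vectors orthogonal to them modulo
`2`, a self-dual code.

Modulo `2` the roots are distinct and nonzero, so a nonzero vector orthogonal to the rows modulo
`2` has norm at least `3`; the rows themselves span a binary code with weights `16` and `20` only.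
So nonzero vectors of the lifted code have norm at least `min (4 * 3) 16 = 12`.

A vector `a ᵥ* M + 2 • t` of the lifted code has norm divisible by `8` exactly when the entries of
`t` have even sum. By duality over the field with two elements, the shadow therefore comes from
vectors congruent modulo `2` to the all-one vector plus a combination of the rows. They have at
least `16` odd entries, and their norms are congruent to `36` modulo `8`, hence are at least `20`.
-/

open scoped Matrix

section Divisibility

variable {ι : Type*} [Fintype ι]

lemma dvd_dotProduct {R : Type*} [CommSemiring R] {d : R} {y : ι → R} (x : ι → R)
    (h : ∀ i, d ∣ y i) : d ∣ x ⬝ᵥ y :=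
  Finset.dvd_sum fun i _ => (h i).mul_left (x i)

lemma dvd_vecMul_dotProduct {R κ : Type*} [CommSemiring R] [Fintype κ] {M : Matrix κ ι R} {d : R}
    {y : ι → R} (a : κ → R) (h : ∀ j, d ∣ (M *ᵥ y) j) : d ∣ a ᵥ* M ⬝ᵥ y := by
  rw [← Matrix.dotProduct_mulVec]
  exact dvd_dotProduct a h

lemma two_dvd_dotProduct_self_sub_sum (x : ι → ℤ) : 2 ∣ x ⬝ᵥ x - ∑ i, x i := by
  rw [dotProduct, ← Finset.sum_sub_distrib]
  refine Finset.dvd_sum fun i _ => ?_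
  simpa only [mul_sub_one] using (Int.even_mul_pred_self (x i)).two_dvd

lemma dotProduct_self_modEq_card_of_odd {x : ι → ℤ} (hx : ∀ i, Odd (x i)) :
    x ⬝ᵥ x ≡ Fintype.card ι [ZMOD 8] := by
  have hcard : (Fintype.card ι : ℤ) = ∑ _i : ι, 1 := by simp
  rw [hcard, dotProduct]
  refine Int.ModEq.sum fun i _ => (Int.modEq_iff_dvd.mpr ?_).symm
  simpa only [sq] using Int.eight_dvd_sq_sub_one_of_odd (hx i)

lemma two_mul_dvd_dotProduct_self_sum {R κ : Type*} [CommSemiring R] {d : R} {v : κ → ι → R}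
    (hdot : ∀ j k, d ∣ v j ⬝ᵥ v k) (hself : ∀ j, 2 * d ∣ v j ⬝ᵥ v j) (s : Finset κ) :
    2 * d ∣ (∑ j ∈ s, v j) ⬝ᵥ ∑ j ∈ s, v j := by
  classical
  induction s using Finset.induction_on with
  | empty => simp
  | insert k s hk ih =>
    have hcross : d ∣ v k ⬝ᵥ ∑ j ∈ s, v j := by
      rw [dotProduct_sum]
      exact Finset.dvd_sum fun j _ => hdot k j
    rw [Finset.sum_insert hk]
    set y := ∑ j ∈ s, v j
    have hsq : (v k + y) ⬝ᵥ (v k + y) = v k ⬝ᵥ v k + 2 * (v k ⬝ᵥ y) + y ⬝ᵥ y := by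
      rw [add_dotProduct, dotProduct_add, dotProduct_add, dotProduct_comm y (v k)]
      ring
    rw [hsq]
    exact ((hself k).add (mul_dvd_mul_left 2 hcross)).add ih

lemma dvd_mulVec_vecMul {R κ : Type*} [CommSemiring R] [Fintype κ] {M : Matrix κ ι R} {d : R}
    (hgram : ∀ j k, d ∣ (M * Mᵀ) j k) (a : κ → R) (j : κ) : d ∣ (M *ᵥ (a ᵥ* M)) j := by
  rw [← Matrix.mulVec_transpose, Matrix.mulVec_mulVec, Matrix.mulVec, dotProduct_comm]
  exact dvd_dotProduct a (hgram j)

lemma two_mul_dvd_dotProduct_self_vecMul {R κ : Type*} [CommSemiring R] [Fintype κ]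
    {M : Matrix κ ι R} {d : R} (hgram : ∀ j k, d ∣ (M * Mᵀ) j k)
    (hdiag : ∀ j, 2 * d ∣ (M * Mᵀ) j j) (a : κ → R) : 2 * d ∣ a ᵥ* M ⬝ᵥ a ᵥ* M := by
  have hdot (j k : κ) : (a j • M j) ⬝ᵥ (a k • M k) = a j * a k * (M * Mᵀ) j k := by
    rw [smul_dotProduct, dotProduct_smul, smul_eq_mul, smul_eq_mul, ← mul_assoc]
    rfl
  rw [Matrix.vecMul_eq_sum]
  refine two_mul_dvd_dotProduct_self_sum (fun j k => ?_) (fun j => ?_) Finset.univ <;>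
    rw [hdot]
  exacts [(hgram j k).mul_left _, (hdiag j).mul_left _]

end Divisibility

section ReductionModPrime

variable {κ ι : Type*} [Fintype κ] [Fintype ι]

lemma exists_vecMul_eq_of_forall_dotProduct_eq_zero {K : Type*} [Field K] {A : Matrix κ ι K}
    {v : ι → K} (h : ∀ t, A *ᵥ t = 0 → v ⬝ᵥ t = 0) : ∃ b, b ᵥ* A = v := by
  classical
  have hmem : dotProductBilin K K v ∈
      Submodule.span K (Set.range fun j => dotProductBilin K K (A j)) := by
    refine mem_span_of_iInf_ker_le_ker fun t ht => h t (funext fun j => ?_)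
    exact (Submodule.mem_iInf _).mp ht j
  obtain ⟨b, hb⟩ := (Submodule.mem_span_range_iff_exists_fun K).mp hmem
  refine ⟨b, funext fun i => ?_⟩
  have hi := LinearMap.congr_fun hb (Pi.single i 1)
  simpa [Matrix.vecMul_eq_sum, dotProductBilin] using hi

lemma exists_eq_vecMul_add_smul (p : ℕ) [Fact p.Prime] {M : Matrix κ ι ℤ} {z : ι → ℤ}
    (h : ∀ t, (∀ j, (p : ℤ) ∣ (M *ᵥ t) j) → (p : ℤ) ∣ z ⬝ᵥ t) :
    ∃ (a : κ → ℤ) (s : ι → ℤ), z = a ᵥ* M + (p : ℤ) • s := by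
  set f := Int.castRingHom (ZMod p)
  have hf (m : ℤ) : f m = 0 ↔ (p : ℤ) ∣ m := ZMod.intCast_zmod_eq_zero_iff_dvd m p
  have f_surjective : Function.Surjective f := ZMod.intCast_surjective
  obtain ⟨b, hb⟩ : ∃ b, b ᵥ* M.map f = f ∘ z := by
    refine exists_vecMul_eq_of_forall_dotProduct_eq_zero fun t ht => ?_
    obtain ⟨t, rfl⟩ := f_surjective.comp_left t
    rw [← RingHom.map_dotProduct, hf]
    refine h t fun j => ?_
    rw [← hf, RingHom.map_mulVec, ht, Pi.zero_apply]
  obtain ⟨a, rfl⟩ := f_surjective.comp_left b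
  have hdvd (i : ι) : (p : ℤ) ∣ z i - (a ᵥ* M) i := by
    rw [← hf, map_sub, RingHom.map_vecMul, hb, Function.comp_apply, sub_self]
  choose s hs using hdvd
  exact ⟨a, s, funext fun i => by simp [← hs]⟩

lemma exists_eq_smul_one_add_vecMul_add_smul (p : ℕ) [Fact p.Prime] {M : Matrix κ ι ℤ} {z : ι → ℤ}
    (h : ∀ t, (∀ j, (p : ℤ) ∣ (M *ᵥ t) j) → (p : ℤ) ∣ ∑ i, t i → (p : ℤ) ∣ z ⬝ᵥ t) :
    ∃ (k : ℤ) (a : κ → ℤ) (s : ι → ℤ), z = k • 1 + a ᵥ* M + (p : ℤ) • s := by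
  set N := M.fromRows (Matrix.replicateRow Unit 1)
  have hN (t : ι → ℤ) : N *ᵥ t = Sum.elim (M *ᵥ t) fun _ => ∑ i, t i := by
    rw [Matrix.fromRows_mulVec, ← one_dotProduct]
    rfl
  obtain ⟨a, s, hz⟩ := exists_eq_vecMul_add_smul p (M := N) (z := z) fun t ht => by
    rw [hN] at ht
    exact h t (fun j => ht (Sum.inl j)) (ht (Sum.inr ()))
  refine ⟨a (Sum.inr ()), a ∘ Sum.inl, s, ?_⟩
  rw [hz, Matrix.vecMul_fromRows, add_comm (_ ᵥ* M)]
  congr 2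
  ext i
  simp [Matrix.vecMul]

end ReductionModPrime

section CodesModFour

variable {κ ι : Type*} [Fintype κ] [Fintype ι] {M : Matrix κ ι ℤ}

/-- The inverse image in `ℤ^ι` of the dual of a code over `ℤ/4`, for the inverse image `C` of that
code. -/
def dualModFour (C : Set (ι → ℤ)) : Set (ι → ℤ) :=
  {w | ∀ z ∈ C, 4 ∣ w ⬝ᵥ z}

/-- The vectors of a code over `ℤ/4`, lifted to `ℤ^ι`, whose Euclidean weight is divisible by `8`;
Construction A turns them into the even sublattice. -/
def evenPart (C : Set (ι → ℤ)) : Set (ι → ℤ) :=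
  {z | z ∈ C ∧ 8 ∣ z ⬝ᵥ z}

variable (M) in
/-- The inverse image in `ℤ^ι` of the code over `ℤ/4` that is generated by the rows of `M` and by
twice the vectors orthogonal to them modulo `2`. When `M * Mᵀ` vanishes modulo `4`,
membership amounts to the two congruences by which the code is encoded here. -/
def fourCode : Set (ι → ℤ) :=
  {z | (∀ j, 4 ∣ (M *ᵥ z) j) ∧ ∃ a s, z = a ᵥ* M + (2 : ℤ) • s}

variable (M) in
/-- The translate of `fourCode M` that Construction A turns into the shadow: its residues modulo `2`
are those of `fourCode M` shifted by the all-one vector. -/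
def fourShadow : Set (ι → ℤ) :=
  {w | (∀ j, 4 ∣ (M *ᵥ w) j) ∧ ∃ a s, w = 1 + a ᵥ* M + (2 : ℤ) • s}

lemma two_smul_mem_fourCode {t : ι → ℤ} (ht : ∀ j, 2 ∣ (M *ᵥ t) j) :
    (2 : ℤ) • t ∈ fourCode M := by
  refine ⟨fun j => ?_, 0, t, by simp⟩
  rw [Matrix.mulVec_smul]
  exact mul_dvd_mul_left 2 (ht j)

lemma row_mem_fourCode (hgram : ∀ j k, 4 ∣ (M * Mᵀ) j k) (j : κ) : M j ∈ fourCode M := by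
  classical
  exact ⟨fun k => hgram k j, Pi.single j 1, 0, by simp [Matrix.row]⟩

lemma two_dvd_mulVec_of_vecMul_add_mem (hgram : ∀ j k, 4 ∣ (M * Mᵀ) j k) {a : κ → ℤ} {s : ι → ℤ}
    (hmem : a ᵥ* M + (2 : ℤ) • s ∈ fourCode M) (j : κ) : 2 ∣ (M *ᵥ s) j := by
  have hsum := hmem.1 j
  rw [Matrix.mulVec_add, Matrix.mulVec_smul, Pi.add_apply, Pi.smul_apply, smul_eq_mul] at hsum
  have hrows := dvd_mulVec_vecMul hgram a j
  omega

lemma four_dvd_dotProduct_of_mem_fourCode (hgram : ∀ j k, 4 ∣ (M * Mᵀ) j k) {z w : ι → ℤ}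
    (hz : z ∈ fourCode M) (hw : w ∈ fourCode M) : 4 ∣ w ⬝ᵥ z := by
  obtain ⟨b, t, rfl⟩ := hw.2
  have htors := two_dvd_mulVec_of_vecMul_add_mem hgram hw
  obtain ⟨a, s, rfl⟩ := hz.2
  have hz_rows := dvd_vecMul_dotProduct b hz.1
  have ht_rows := dvd_vecMul_dotProduct a htors
  rw [dotProduct_comm] at ht_rows
  simp only [add_dotProduct, dotProduct_add, smul_dotProduct, dotProduct_smul, smul_eq_mul]
    at hz_rows ⊢
  omega

theorem dualModFour_fourCode (hgram : ∀ j k, 4 ∣ (M * Mᵀ) j k) :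
    dualModFour (fourCode M) = fourCode M := by
  refine Set.Subset.antisymm (fun w hw => ?_)
    fun w hw z hz => four_dvd_dotProduct_of_mem_fourCode hgram hz hw
  refine ⟨fun j => ?_, exists_eq_vecMul_add_smul 2 fun t ht => ?_⟩
  · rw [Matrix.mulVec, dotProduct_comm]
    exact hw _ (row_mem_fourCode hgram j)
  · have hpair := hw _ (two_smul_mem_fourCode ht)
    rw [dotProduct_smul, smul_eq_mul] at hpair
    push_cast
    omega

lemma eight_dvd_dotProduct_self_sub_of_mem_fourCode (hgram : ∀ j k, 4 ∣ (M * Mᵀ) j k)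
    (hdiag : ∀ j, 8 ∣ (M * Mᵀ) j j) {a : κ → ℤ} {s : ι → ℤ}
    (hmem : a ᵥ* M + (2 : ℤ) • s ∈ fourCode M) :
    8 ∣ (a ᵥ* M + (2 : ℤ) • s) ⬝ᵥ (a ᵥ* M + (2 : ℤ) • s) - 4 * ∑ i, s i := by
  have hrows : 8 ∣ a ᵥ* M ⬝ᵥ a ᵥ* M :=
    two_mul_dvd_dotProduct_self_vecMul hgram hdiag a
  have htors := dvd_vecMul_dotProduct a (two_dvd_mulVec_of_vecMul_add_mem hgram hmem)
  have hparity := two_dvd_dotProduct_self_sub_sum s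
  simp only [add_dotProduct, dotProduct_add, smul_dotProduct, dotProduct_smul, smul_eq_mul]
  rw [dotProduct_comm s (a ᵥ* M)]
  omega

lemma fourShadow_subset_dualModFour_evenPart (hgram : ∀ j k, 4 ∣ (M * Mᵀ) j k)
    (hdiag : ∀ j, 8 ∣ (M * Mᵀ) j j) : fourShadow M ⊆ dualModFour (evenPart (fourCode M)) := by
  rintro w ⟨hw_rows, b, t, rfl⟩ z ⟨hz, hz8⟩
  obtain ⟨a, s, rfl⟩ := hz.2
  have htors := two_dvd_mulVec_of_vecMul_add_mem hgram hz
  have hnorm := eight_dvd_dotProduct_self_sub_of_mem_fourCode hgram hdiag hz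
  have hs_sum : 2 ∣ ∑ i, s i := by omega
  have hs_rows := dvd_vecMul_dotProduct b htors
  have hw_comb := dvd_vecMul_dotProduct a hw_rows
  rw [dotProduct_comm] at hw_comb
  rw [dotProduct_add, dotProduct_smul, smul_eq_mul, add_dotProduct _ _ s, add_dotProduct _ _ s,
    one_dotProduct, smul_dotProduct, smul_eq_mul]
  omega

lemma dualModFour_evenPart_subset (hgram : ∀ j k, 4 ∣ (M * Mᵀ) j k)
    (hdiag : ∀ j, 8 ∣ (M * Mᵀ) j j) :
    dualModFour (evenPart (fourCode M)) ⊆ fourCode M ∪ fourShadow M := by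
  intro w hw
  have hrows (j : κ) : 4 ∣ (M *ᵥ w) j := by
    rw [Matrix.mulVec, dotProduct_comm]
    exact hw _ ⟨row_mem_fourCode hgram j, hdiag j⟩
  have htors (t : ι → ℤ) (ht : ∀ j, 2 ∣ (M *ᵥ t) j) (hsum : 2 ∣ ∑ i, t i) : 2 ∣ w ⬝ᵥ t := by
    have hparity := two_dvd_dotProduct_self_sub_sum t
    have hnorm : 8 ∣ ((2 : ℤ) • t) ⬝ᵥ ((2 : ℤ) • t) := by
      simp only [smul_dotProduct, dotProduct_smul, smul_eq_mul]
      omega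
    have hpair := hw _ ⟨two_smul_mem_fourCode ht, hnorm⟩
    rw [dotProduct_smul, smul_eq_mul] at hpair
    omega
  obtain ⟨k, a, s, hw_eq⟩ := exists_eq_smul_one_add_vecMul_add_smul 2 htors
  rcases Int.even_or_odd' k with ⟨l, rfl | rfl⟩
  · refine Or.inl ⟨hrows, a, s + l • 1, hw_eq.trans ?_⟩
    push_cast
    module
  · refine Or.inr ⟨hrows, a, s + l • 1, hw_eq.trans ?_⟩
    push_cast
    module

lemma disjoint_fourCode_fourShadow (hgram : ∀ j k, 4 ∣ (M * Mᵀ) j k) {t : ι → ℤ}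
    (ht : ∀ j, 2 ∣ (M *ᵥ t) j) (hodd : Odd (t ⬝ᵥ t)) :
    Disjoint (fourCode M) (fourShadow M) := by
  refine Set.disjoint_left.mpr ?_
  rintro w hw ⟨-, b, s, rfl⟩
  have hpair := four_dvd_dotProduct_of_mem_fourCode hgram (two_smul_mem_fourCode ht) hw
  have ht_rows := dvd_vecMul_dotProduct b ht
  have hparity := two_dvd_dotProduct_self_sub_sum t
  rw [dotProduct_smul, smul_eq_mul, add_dotProduct, add_dotProduct, one_dotProduct,
    smul_dotProduct, smul_eq_mul] at hpair
  have := Int.odd_iff.mp hodd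
  omega

theorem dualModFour_evenPart_sdiff_fourCode (hgram : ∀ j k, 4 ∣ (M * Mᵀ) j k)
    (hdiag : ∀ j, 8 ∣ (M * Mᵀ) j j) {t : ι → ℤ} (ht : ∀ j, 2 ∣ (M *ᵥ t) j)
    (hodd : Odd (t ⬝ᵥ t)) :
    dualModFour (evenPart (fourCode M)) \ fourCode M = fourShadow M := by
  refine Set.Subset.antisymm
    (Set.sdiff_subset_iff.mpr (dualModFour_evenPart_subset hgram hdiag))
    (Set.subset_sdiff.mpr ⟨fourShadow_subset_dualModFour_evenPart hgram hdiag, ?_⟩)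
  exact (disjoint_fourCode_fourShadow hgram ht hodd).symm

theorem dotProduct_self_modEq_card_of_mem_fourShadow (hgram : ∀ j k, 4 ∣ (M * Mᵀ) j k)
    (hdiag : ∀ j, 8 ∣ (M * Mᵀ) j j) {w : ι → ℤ} (hw : w ∈ fourShadow M) :
    w ⬝ᵥ w ≡ Fintype.card ι [ZMOD 8] := by
  obtain ⟨hrows, a, s, rfl⟩ := hw
  set u : ι → ℤ := 1 + (2 : ℤ) • s
  have hu : u ⬝ᵥ u ≡ Fintype.card ι [ZMOD 8] :=
    dotProduct_self_modEq_card_of_odd fun i => ⟨s i, by simp [u, add_comm]⟩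
  have hw_eq : 1 + a ᵥ* M + (2 : ℤ) • s = a ᵥ* M + u := by
    rw [add_comm 1, add_assoc]
  rw [hw_eq] at hrows ⊢
  have hpair := dvd_vecMul_dotProduct a hrows
  have hself : 8 ∣ a ᵥ* M ⬝ᵥ a ᵥ* M :=
    two_mul_dvd_dotProduct_self_vecMul hgram hdiag a
  refine Int.ModEq.trans (Int.modEq_iff_dvd.mpr ?_) hu
  simp only [add_dotProduct, dotProduct_add] at hpair ⊢
  rw [dotProduct_comm u (a ᵥ* M)]
  omega

end CodesModFour

section ModTwo

variable {κ ι : Type*} {M : Matrix κ ι ℤ}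

/-- The coordinatewise reduction modulo `2` of an integral vector. -/
def modTwo (z : ι → ℤ) : ι → ZMod 2 :=
  fun i => z i

lemma modTwo_eq_zero_iff {z : ι → ℤ} : modTwo z = 0 ↔ ∃ m, z = (2 : ℤ) • m := by
  have hcoord (i : ι) : modTwo z i = 0 ↔ ∃ m, z i = 2 * m :=
    ZMod.intCast_zmod_eq_zero_iff_dvd (z i) 2
  simp only [funext_iff, Pi.zero_apply, hcoord, Classical.skolem]
  rfl

lemma modTwo_mulVec [Fintype ι] (m : ι → ℤ) : modTwo (M *ᵥ m) = M.map (↑) *ᵥ modTwo m :=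
  funext (RingHom.map_mulVec (Int.castRingHom (ZMod 2)) M m)

lemma modTwo_vecMul [Fintype κ] (a : κ → ℤ) : modTwo (a ᵥ* M) = modTwo a ᵥ* M.map (↑) :=
  funext (RingHom.map_vecMul (Int.castRingHom (ZMod 2)) M a)

lemma modTwo_add_two_smul (x s : ι → ℤ) : modTwo (x + (2 : ℤ) • s) = modTwo x := by
  ext i
  simp [modTwo, CharTwo.two_eq_zero]

lemma modTwo_one_add (x : ι → ℤ) : modTwo (1 + x) = 1 + modTwo x := by
  ext i
  simp [modTwo]

lemma hammingNorm_modTwo_le_dotProduct_self [Fintype ι] (z : ι → ℤ) :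
    hammingNorm (modTwo z) ≤ z ⬝ᵥ z := by
  rw [hammingNorm, Finset.card_filter, Nat.cast_sum]
  refine Finset.sum_le_sum fun i _ => ?_
  split_ifs with hi
  · have hz : z i ≠ 0 := fun h => hi (by simp [modTwo, h])
    exact Int.add_one_le_of_lt (mul_self_pos.mpr hz)
  · exact mul_self_nonneg (z i)

lemma hammingNorm_one_add_add_hammingNorm [Fintype ι] (x : ι → ZMod 2) :
    hammingNorm (1 + x) + hammingNorm x = Fintype.card ι := by
  have hcompl (c : ZMod 2) : 1 + c ≠ 0 ↔ ¬ c ≠ 0 := by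
    revert c
    decide
  simp only [hammingNorm, Pi.add_apply, Pi.one_apply, hcompl]
  rw [add_comm, Finset.card_filter_add_card_filter_not, Finset.card_univ]

end ModTwo

section Weights

variable {κ ι : Type*} [Fintype ι] {M : Matrix κ ι ℤ}

lemma three_le_hammingNorm_of_mulVec_eq_zero {A : Matrix κ ι (ZMod 2)}
    (hne : ∀ i, A.col i ≠ 0) (hinj : Function.Injective A.col) {x : ι → ZMod 2}
    (hx : A *ᵥ x = 0) (h0 : x ≠ 0) : 3 ≤ hammingNorm x := by
  classical
  set T : Finset ι := {i | x i ≠ 0}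
  have hsum : ∑ i ∈ T, A.col i = 0 := by
    rw [← hx, Matrix.mulVec_eq_sum, Finset.sum_filter]
    refine Finset.sum_congr rfl fun i _ => ?_
    split_ifs with hi
    · have hi_one : x i = 1 := Fin.eq_one_of_ne_zero (x i) hi
      rw [hi_one, MulOpposite.op_one, one_smul]
      rfl
    · simp [not_not.mp hi]
  change 3 ≤ T.card
  by_contra! hlt
  have hT : T.card ≠ 0 := hammingNorm_ne_zero_iff.mpr h0
  obtain h1 | h2 : T.card = 1 ∨ T.card = 2 := by omega
  · obtain ⟨i, hi⟩ := Finset.card_eq_one.mp h1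
    rw [hi, Finset.sum_singleton] at hsum
    exact hne i hsum
  · obtain ⟨i, k, hik, hi⟩ := Finset.card_eq_two.mp h2
    rw [hi, Finset.sum_pair hik] at hsum
    exact hik (hinj (funext fun j => CharTwo.add_eq_zero.mp (congrFun hsum j)))

lemma three_le_dotProduct_self_of_two_dvd_mulVec
    (hne : ∀ i, (M.map ((↑) : ℤ → ZMod 2)).col i ≠ 0)
    (hinj : Function.Injective (M.map ((↑) : ℤ → ZMod 2)).col) {m : ι → ℤ}
    (hm : ∀ j, 2 ∣ (M *ᵥ m) j) (h0 : m ≠ 0) : 3 ≤ m ⬝ᵥ m := by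
  by_cases hmod : modTwo m = 0
  · obtain ⟨l, rfl⟩ := modTwo_eq_zero_iff.mp hmod
    have hl : 0 < l ⬝ᵥ l := by
      refine lt_of_le_of_ne (Finset.sum_nonneg fun i _ => mul_self_nonneg (l i)) fun h => h0 ?_
      rw [dotProduct_self_eq_zero.mp h.symm, smul_zero]
    rw [smul_dotProduct, dotProduct_smul, smul_eq_mul, smul_eq_mul]
    omega
  · have hker : M.map ((↑) : ℤ → ZMod 2) *ᵥ modTwo m = 0 := by
      rw [← modTwo_mulVec]
      exact funext fun j => (ZMod.intCast_zmod_eq_zero_iff_dvd _ 2).mpr (hm j)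
    have hweight := three_le_hammingNorm_of_mulVec_eq_zero hne hinj hker hmod
    have hle := hammingNorm_modTwo_le_dotProduct_self m
    omega

variable [Fintype κ]

lemma le_dotProduct_self_of_mem_fourCode {d : ℤ}
    (htors : ∀ m, (∀ j, 2 ∣ (M *ᵥ m) j) → m ≠ 0 → d ≤ m ⬝ᵥ m)
    (hres : ∀ b : κ → ZMod 2, b ᵥ* M.map (↑) ≠ 0 → 4 * d ≤ hammingNorm (b ᵥ* M.map (↑)))
    {z : ι → ℤ} (hz : z ∈ fourCode M) (h0 : z ≠ 0) : 4 * d ≤ z ⬝ᵥ z := by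
  obtain ⟨hrows, a, s, hz_eq⟩ := hz
  have hmod : modTwo z = modTwo a ᵥ* M.map (↑) := by
    rw [hz_eq, modTwo_add_two_smul, modTwo_vecMul]
  by_cases hres0 : modTwo z = 0
  · obtain ⟨m, rfl⟩ := modTwo_eq_zero_iff.mp hres0
    have hm (j : κ) : 2 ∣ (M *ᵥ m) j := by
      have hj := hrows j
      rw [Matrix.mulVec_smul, Pi.smul_apply, smul_eq_mul] at hj
      omega
    have hle := htors m hm (right_ne_zero_of_smul h0)
    rw [smul_dotProduct, dotProduct_smul, smul_eq_mul, smul_eq_mul]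
    omega
  · calc 4 * d ≤ hammingNorm (modTwo z) := by
          rw [hmod] at hres0 ⊢
          exact hres _ hres0
      _ ≤ z ⬝ᵥ z := hammingNorm_modTwo_le_dotProduct_self z

lemma le_dotProduct_self_of_mem_fourShadow {d : ℤ}
    (hres : ∀ b : κ → ZMod 2, d ≤ hammingNorm (1 + b ᵥ* M.map (↑)))
    {w : ι → ℤ} (hw : w ∈ fourShadow M) : d ≤ w ⬝ᵥ w := by
  obtain ⟨-, a, s, rfl⟩ := hw
  refine le_trans ?_ (hammingNorm_modTwo_le_dotProduct_self _)
  rw [modTwo_add_two_smul, modTwo_one_add, modTwo_vecMul]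
  exact hres (modTwo a)

end Weights

section ConstructionA

variable {n : ℕ} {C : Set (Fin n → ℤ)}

/-- Half of an integral vector, as a point of Euclidean space. -/
def halfVec (z : Fin n → ℤ) : EuclideanSpace ℝ (Fin n) :=
  WithLp.toLp 2 fun i => (z i : ℝ) / 2

/-- Construction A: the halves of the integral vectors in `C`, where `C` is the inverse image
in `ℤⁿ` of a code over `ℤ/4`. -/
def constructionA (C : Set (Fin n → ℤ)) : Set (EuclideanSpace ℝ (Fin n)) :=
  halfVec '' C

lemma halfVec_injective : Function.Injective (halfVec (n := n)) := fun z w h => by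
  ext i
  have hi : (z i : ℝ) / 2 = w i / 2 := congrArg (fun x : EuclideanSpace ℝ (Fin n) => x i) h
  exact_mod_cast (div_left_inj' two_ne_zero).mp hi

lemma halfVec_zero : halfVec (0 : Fin n → ℤ) = 0 := by
  ext i
  simp [halfVec]

lemma inner_halfVec (z w : Fin n → ℤ) : ⟪halfVec z, halfVec w⟫ = ((z ⬝ᵥ w : ℤ) : ℝ) / 4 := by
  simp only [halfVec, dotProduct, PiLp.inner_apply, RCLike.inner_apply, conj_trivial,
    Int.cast_sum, Int.cast_mul, Finset.sum_div]
  exact Finset.sum_congr rfl fun i _ => by ring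

lemma normOf_halfVec (z : Fin n → ℤ) : normOf (halfVec z) = ((z ⬝ᵥ z : ℤ) : ℝ) / 4 :=
  inner_halfVec z z

lemma intCast_div_four_eq_mul_iff {k c : ℤ} :
    (∃ m : ℤ, (k : ℝ) / 4 = c * m) ↔ 4 * c ∣ k := by
  refine exists_congr fun m => ?_
  rw [div_eq_iff four_ne_zero, ← @Int.cast_inj ℝ]
  push_cast
  rw [mul_comm (c * m : ℝ) 4, mul_assoc]

lemma exists_inner_halfVec_eq_intCast_iff {z w : Fin n → ℤ} :
    (∃ m : ℤ, ⟪halfVec z, halfVec w⟫ = (m : ℝ)) ↔ 4 ∣ z ⬝ᵥ w := by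
  simpa [inner_halfVec] using intCast_div_four_eq_mul_iff (k := z ⬝ᵥ w) (c := 1)

lemma exists_normOf_halfVec_eq_two_mul_iff {z : Fin n → ℤ} :
    (∃ m : ℤ, normOf (halfVec z) = 2 * (m : ℝ)) ↔ 8 ∣ z ⬝ᵥ z := by
  simpa [normOf_halfVec] using intCast_div_four_eq_mul_iff (k := z ⬝ᵥ z) (c := 2)

lemma halfVec_single_four (i : Fin n) :
    halfVec (Pi.single i 4) = EuclideanSpace.single i (2 : ℝ) := by
  ext k
  rcases eq_or_ne k i with rfl | hk
  · have hhalf : (4 : ℝ) / 2 = 2 := by norm_num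
    simp [halfVec, hhalf]
  · simp [halfVec, hk]

lemma dualSet_constructionA (hC : ∀ i, Pi.single i 4 ∈ C) :
    dualSet (constructionA C) = constructionA (dualModFour C) := by
  ext x
  constructor
  · intro hx
    have hcoord (i : Fin n) : ∃ m : ℤ, 2 * x i = m := by
      simpa [halfVec_single_four, EuclideanSpace.inner_single_right] using
        hx _ (Set.mem_image_of_mem halfVec (hC i))
    choose w hw using hcoord
    obtain rfl : halfVec w = x := by
      ext i
      simp [halfVec, ← hw]
    exact ⟨w, fun z hz => exists_inner_halfVec_eq_intCast_iff.mp (hx _ ⟨z, hz, rfl⟩), rfl⟩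
  · rintro ⟨w, hw, rfl⟩ _ ⟨z, hz, rfl⟩
    exact exists_inner_halfVec_eq_intCast_iff.mpr (hw z hz)

lemma evenSublattice_constructionA :
    evenSublattice (constructionA C) = constructionA (evenPart C) := by
  ext x
  constructor
  · rintro ⟨⟨z, hz, rfl⟩, heven⟩
    exact ⟨z, ⟨hz, exists_normOf_halfVec_eq_two_mul_iff.mp heven⟩, rfl⟩
  · rintro ⟨z, ⟨hz, hnorm⟩, rfl⟩
    exact ⟨⟨z, hz, rfl⟩, exists_normOf_halfVec_eq_two_mul_iff.mpr hnorm⟩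

lemma single_four_mem_of_dualModFour_eq (hC : dualModFour C = C) (i : Fin n) :
    Pi.single i 4 ∈ C := by
  rw [← hC]
  intro z _
  rw [single_dotProduct]
  exact dvd_mul_right 4 _

theorem isUnimodularLattice_constructionA (hC : dualModFour C = C) :
    IsUnimodularLattice (constructionA C) := by
  rw [IsUnimodularLattice, dualSet_constructionA (single_four_mem_of_dualModFour_eq hC), hC]

theorem shadow_constructionA (hC : dualModFour C = C) :
    shadow (constructionA C) = constructionA (dualModFour (evenPart C) \ C) := by
  have hsingle (i : Fin n) : Pi.single i 4 ∈ evenPart C := by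
    refine ⟨single_four_mem_of_dualModFour_eq hC i, ?_⟩
    rw [single_dotProduct, Pi.single_eq_same]
    norm_num
  rw [shadow, evenSublattice_constructionA, dualSet_constructionA hsingle, constructionA,
    constructionA, constructionA, Set.image_sdiff halfVec_injective]

lemma isLeast_normOf_constructionA {k : ℤ} (hk : IsLeast ((fun z => z ⬝ᵥ z) '' C) k) :
    IsLeast {r | ∃ x ∈ constructionA C, normOf x = r} ((k : ℝ) / 4) := by
  have hmono : Monotone fun m : ℤ => (m : ℝ) / 4 := fun a b hab => by
    dsimp only
    gcongr
  have himage : {r | ∃ x ∈ constructionA C, normOf x = r} =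
      (fun m : ℤ => (m : ℝ) / 4) '' ((fun z => z ⬝ᵥ z) '' C) := by
    change normOf '' (halfVec '' C) = _
    simp only [Set.image_image, normOf_halfVec]
  rw [himage]
  exact hmono.map_isLeast hk

theorem hasMinNorm_constructionA {k : ℤ}
    (hk : IsLeast ((fun z => z ⬝ᵥ z) '' (C \ {0})) k) :
    HasMinNorm (constructionA C) ((k : ℝ) / 4) := by
  have hdiff : constructionA (C \ {0}) = constructionA C \ {0} := by
    rw [constructionA, constructionA, Set.image_sdiff halfVec_injective, Set.image_singleton,
      halfVec_zero]
  have hleast := isLeast_normOf_constructionA hk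
  rw [hdiff] at hleast
  simpa only [HasMinNorm, Set.mem_sdiff, Set.mem_singleton_iff, and_assoc] using hleast

theorem hasSigma_constructionA (hC : dualModFour C = C) {k : ℤ}
    (hk : IsLeast ((fun w => w ⬝ᵥ w) '' (dualModFour (evenPart C) \ C)) k) :
    HasSigma (constructionA C) k := by
  refine ⟨k / 4, ?_, by ring⟩
  rw [HasShadowMinNorm, shadow_constructionA hC]
  exact isLeast_normOf_constructionA hk

end ConstructionA

section RootSystemE6

/-- The coefficients, in the basis of simple roots, of the 36 positive roots of `E₆`; the columns
are indexed by the roots. -/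
def rootMatrixE6 : Matrix (Fin 6) (Fin 36) ℤ :=
  !![1, 0, 0, 0, 0, 0; 0, 1, 0, 0, 0, 0; 0, 0, 1, 0, 0, 0; 0, 0, 0, 1, 0, 0;
     0, 0, 0, 0, 1, 0; 0, 0, 0, 0, 0, 1; 1, 1, 0, 0, 0, 0; 0, 1, 1, 0, 0, 0;
     0, 0, 1, 1, 0, 0; 0, 0, 1, 0, 0, 1; 0, 0, 0, 1, 1, 0; 1, 1, 1, 0, 0, 0;
     0, 1, 1, 1, 0, 0; 0, 1, 1, 0, 0, 1; 0, 0, 1, 1, 1, 0; 0, 0, 1, 1, 0, 1;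
     1, 1, 1, 1, 0, 0; 1, 1, 1, 0, 0, 1; 0, 1, 1, 1, 1, 0; 0, 1, 1, 1, 0, 1;
     0, 0, 1, 1, 1, 1; 1, 1, 1, 1, 1, 0; 1, 1, 1, 1, 0, 1; 0, 1, 1, 1, 1, 1;
     0, 1, 2, 1, 0, 1; 1, 1, 1, 1, 1, 1; 1, 1, 2, 1, 0, 1; 0, 1, 2, 1, 1, 1;
     1, 1, 2, 1, 1, 1; 1, 2, 2, 1, 0, 1; 0, 1, 2, 2, 1, 1; 1, 2, 2, 1, 1, 1;
     1, 1, 2, 2, 1, 1; 1, 2, 2, 2, 1, 1; 1, 2, 3, 2, 1, 1; 1, 2, 3, 2, 1, 2]ᵀ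

lemma four_dvd_rootMatrixE6_mul_transpose (j k : Fin 6) :
    4 ∣ (rootMatrixE6 * rootMatrixE6ᵀ) j k := by
  revert j k
  decide +kernel

lemma eight_dvd_rootMatrixE6_mul_transpose_diag (j : Fin 6) :
    8 ∣ (rootMatrixE6 * rootMatrixE6ᵀ) j j := by
  revert j
  decide +kernel

lemma col_rootMatrixE6_ne_zero (i : Fin 36) :
    (rootMatrixE6.map ((↑) : ℤ → ZMod 2)).col i ≠ 0 := by
  revert i
  decide +kernel

lemma col_rootMatrixE6_injective :
    Function.Injective (rootMatrixE6.map ((↑) : ℤ → ZMod 2)).col := by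
  decide +kernel

lemma hammingNorm_vecMul_rootMatrixE6 :
    ∀ b : Fin 6 → ZMod 2, b ≠ 0 →
      hammingNorm (b ᵥ* rootMatrixE6.map ((↑) : ℤ → ZMod 2)) = 16 ∨
        hammingNorm (b ᵥ* rootMatrixE6.map ((↑) : ℤ → ZMod 2)) = 20 := by
  decide +kernel

lemma sixteen_le_hammingNorm_one_add_vecMul_rootMatrixE6 (b : Fin 6 → ZMod 2) :
    16 ≤ hammingNorm (1 + b ᵥ* rootMatrixE6.map ((↑) : ℤ → ZMod 2)) := by
  have hcompl := hammingNorm_one_add_add_hammingNorm (b ᵥ* rootMatrixE6.map ((↑) : ℤ → ZMod 2))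
  rw [Fintype.card_fin] at hcompl
  rcases eq_or_ne b 0 with rfl | hb
  · rw [Matrix.zero_vecMul, hammingNorm_zero] at hcompl
    rw [Matrix.zero_vecMul]
    omega
  · rcases hammingNorm_vecMul_rootMatrixE6 b hb with h | h <;> omega

/-- The indicator vector of the linearly dependent roots `α₁`, `α₂` and `α₁ + α₂`. -/
def rootTriple : Fin 36 → ℤ :=
  Pi.single 0 1 + Pi.single 1 1 + Pi.single 6 1

lemma two_dvd_rootMatrixE6_mulVec_rootTriple (j : Fin 6) :
    2 ∣ (rootMatrixE6 *ᵥ rootTriple) j := by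
  revert j
  decide +kernel

lemma rootTriple_dotProduct_self : rootTriple ⬝ᵥ rootTriple = 3 := by
  decide +kernel

theorem isLeast_dotProduct_self_fourCode_rootMatrixE6 :
    IsLeast ((fun z => z ⬝ᵥ z) '' (fourCode rootMatrixE6 \ {0})) 12 := by
  constructor
  · have hmem := two_smul_mem_fourCode two_dvd_rootMatrixE6_mulVec_rootTriple
    refine ⟨_, ⟨hmem, by decide +kernel⟩, ?_⟩
    simp only [smul_dotProduct, dotProduct_smul, rootTriple_dotProduct_self, smul_eq_mul]
    norm_num
  · rintro _ ⟨z, ⟨hz, h0⟩, rfl⟩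
    refine le_dotProduct_self_of_mem_fourCode (d := 3) (fun m => ?_) (fun b hb => ?_) hz h0
    · exact three_le_dotProduct_self_of_two_dvd_mulVec col_rootMatrixE6_ne_zero
        col_rootMatrixE6_injective
    · have hb0 : b ≠ 0 := fun h => hb (by rw [h, Matrix.zero_vecMul])
      rcases hammingNorm_vecMul_rootMatrixE6 b hb0 with h | h <;> omega

/-- A vector of minimal norm in the coset of the code that Construction A turns into the shadow. -/
def minShadowVector : Fin 36 → ℤ :=
  ![-1, 1, 1, 1, 0, 1, -1, 1, 1, -1, 0, 1, -1, -1, 0, 1, -1, 1,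
    0, -1, 0, 0, 1, 0, -1, 0, -1, 0, 0, 1, 0, 0, 0, 0, 0, 0]

lemma minShadowVector_mem_fourShadow : minShadowVector ∈ fourShadow rootMatrixE6 := by
  refine ⟨by decide +kernel, Pi.single 4 1, (minShadowVector - 1 - rootMatrixE6 4) / 2, ?_⟩
  decide +kernel

theorem isLeast_dotProduct_self_fourShadow_rootMatrixE6 :
    IsLeast ((fun w => w ⬝ᵥ w) '' fourShadow rootMatrixE6) 20 := by
  constructor
  · exact ⟨minShadowVector, minShadowVector_mem_fourShadow, by decide +kernel⟩
  · rintro _ ⟨w, hw, rfl⟩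
    have hlower : 16 ≤ w ⬝ᵥ w := le_dotProduct_self_of_mem_fourShadow (fun b => by
      exact_mod_cast sixteen_le_hammingNorm_one_add_vecMul_rootMatrixE6 b) hw
    have hmod : w ⬝ᵥ w ≡ 36 [ZMOD 8] := by
      simpa using dotProduct_self_modEq_card_of_mem_fourShadow
        four_dvd_rootMatrixE6_mul_transpose eight_dvd_rootMatrixE6_mul_transpose_diag hw
    rw [Int.ModEq] at hmod
    change 20 ≤ w ⬝ᵥ w
    omega

theorem dualModFour_evenPart_sdiff_fourCode_rootMatrixE6 :
    dualModFour (evenPart (fourCode rootMatrixE6)) \ fourCode rootMatrixE6 =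
      fourShadow rootMatrixE6 :=
  dualModFour_evenPart_sdiff_fourCode four_dvd_rootMatrixE6_mul_transpose
    eight_dvd_rootMatrixE6_mul_transpose_diag two_dvd_rootMatrixE6_mulVec_rootTriple
    (by rw [rootTriple_dotProduct_self]; decide)

end RootSystemE6

theorem exists_unimodular_dim36_min3_sigma20 :
    ∃ L : Set (EuclideanSpace ℝ (Fin 36)),
      IsUnimodularLattice L ∧ IsOddLattice L ∧ HasMinNorm L 3 ∧ HasSigma L 20 := by
  have hdual : dualModFour (fourCode rootMatrixE6) = fourCode rootMatrixE6 :=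
    dualModFour_fourCode four_dvd_rootMatrixE6_mul_transpose
  have hmin : HasMinNorm (constructionA (fourCode rootMatrixE6)) 3 := by
    convert hasMinNorm_constructionA isLeast_dotProduct_self_fourCode_rootMatrixE6 using 1
    norm_num
  have hodd : IsOddLattice (constructionA (fourCode rootMatrixE6)) := by
    obtain ⟨x, hx, -, hnorm⟩ := hmin.1
    exact ⟨x, hx, 3, by decide, by exact_mod_cast hnorm⟩
  have hsigma : HasSigma (constructionA (fourCode rootMatrixE6)) 20 := by
    refine mod_cast hasSigma_constructionA hdual (k := 20) ?_
    rw [dualModFour_evenPart_sdiff_fourCode_rootMatrixE6]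
    exact isLeast_dotProduct_self_fourShadow_rootMatrixE6
  exact ⟨_, isUnimodularLattice_constructionA hdual, hodd, hmin, hsigma⟩
end
end

section
/- Let B be a binary doubly even [37,6] code such that the dual code B⊥ has minimum Hamming weight 3. Then the weight enumerator of B is either W_B(y) = 1 + 20y¹⁶ + 42y²⁰ + y²⁴ or W_B(y) = 1 + y¹² + 17y¹⁶ + 45y²⁰. -/
noncomputable section

/-- The dual code `B⊥ = {x ∈ F₂ⁿ : x·y = 0 for all y ∈ B}`. -/
def dualCode {n : ℕ} (B : Submodule (ZMod 2) (Fin n → ZMod 2)) : Set (Fin n → ZMod 2) :=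
  {x | ∀ y ∈ B, ∑ i, x i * y i = 0}

/-- A binary code is doubly even if every codeword has Hamming weight divisible by 4. -/
def IsDoublyEven {n : ℕ} (B : Submodule (ZMod 2) (Fin n → ZMod 2)) : Prop :=
  ∀ c ∈ B, 4 ∣ hammingNorm c

/-- A set of binary words has minimum weight `d`:
`d` is the least Hamming weight among its nonzero elements. -/
def HasMinWeight {n : ℕ} (S : Set (Fin n → ZMod 2)) (d : ℕ) : Prop :=
  IsLeast {w : ℕ | ∃ c ∈ S, c ≠ 0 ∧ hammingNorm c = w} d

/-- The number of words of Hamming weight `w` in `S`. -/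
def weightCount {n : ℕ} (S : Set (Fin n → ZMod 2)) (w : ℕ) : ℕ :=
  Set.ncard {c ∈ S | hammingNorm c = w}

/-!
For a codeword `c` put `S c = ∑ i, (-1) ^ c i = 37 - 2 * wt c`. Dual distance at least 3 says that
the coordinate functionals of `B` are nonzero and pairwise distinct, so orthogonality of characters
gives `∑ c ∈ B, S c = 0` and `∑ c ∈ B, S c ^ 2 = 37 * 64`, hence
`∑ c ∈ B, (wt c - 16) * (wt c - 20) = 352`. The zero word contributes 320. On multiples of 4 the
summand is nonnegative, vanishes only at 16 and 20, equals 32 at 12 and 24, and is at least 96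
elsewhere. So exactly one nonzero word has weight 12 or 24, and all the others have weight 16 or 20;
the first moment then determines how many have each.
-/

open Finset

/-- The nontrivial character `a ↦ (-1) ^ a` of `ZMod 2`, with values in `ℤ`. -/
def signChar : AddChar (ZMod 2) ℤ :=
  AddChar.zmodChar 2 (neg_one_sq : (-1 : ℤ) ^ 2 = 1)

theorem signChar_eq_one_sub (a : ZMod 2) : signChar a = 1 - 2 * if a ≠ 0 then 1 else 0 := by
  revert a
  decide

theorem signChar_eq_one_iff {a : ZMod 2} : signChar a = 1 ↔ a = 0 := by
  simp [signChar_eq_one_sub]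

theorem sum_signChar_eq_card_sub {ι : Type*} [Fintype ι] (x : ι → ZMod 2) :
    ∑ i, signChar (x i) = Fintype.card ι - 2 * (hammingNorm x : ℤ) := by
  simp only [signChar_eq_one_sub, sum_sub_distrib, ← mul_sum, sum_boole, hammingNorm]
  simp

section Moments

variable {G ι : Type*} [AddGroup G] [Fintype G]

theorem sum_signChar_comp_eq_zero {φ : G →+ ZMod 2} (hφ : φ ≠ 0) :
    ∑ g, signChar (φ g) = 0 := by
  refine AddChar.sum_eq_zero_of_ne_one (ψ := signChar.compAddMonoidHom φ) fun h ↦ hφ ?_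
  ext g
  exact signChar_eq_one_iff.1 (DFunLike.congr_fun h g)

theorem sum_sum_signChar_eq_zero [Fintype ι] {φ : ι → G →+ ZMod 2} (hφ : ∀ i, φ i ≠ 0) :
    ∑ g, ∑ i, signChar (φ i g) = 0 := by
  rw [sum_comm]
  exact sum_eq_zero fun i _ ↦ sum_signChar_comp_eq_zero (hφ i)

theorem sum_signChar_mul_signChar [DecidableEq ι] {φ : ι → G →+ ZMod 2}
    (hφ : Function.Injective φ) (i j : ι) :
    ∑ g, signChar (φ i g) * signChar (φ j g) = if i = j then (Fintype.card G : ℤ) else 0 := by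
  simp only [← AddChar.map_add_eq_mul, ← AddMonoidHom.add_apply]
  split_ifs with hij
  · simp [hij, CharTwo.add_self_eq_zero]
  · refine sum_signChar_comp_eq_zero fun h ↦ hij (hφ ?_)
    ext g
    exact CharTwo.add_eq_zero.1 (DFunLike.congr_fun h g)

theorem sum_sq_sum_signChar [Fintype ι] {φ : ι → G →+ ZMod 2} (hφ : Function.Injective φ) :
    ∑ g, (∑ i, signChar (φ i g)) ^ 2 = Fintype.card ι * (Fintype.card G : ℤ) := by
  classical
  calc ∑ g, (∑ i, signChar (φ i g)) ^ 2
      = ∑ i, ∑ j, ∑ g, signChar (φ i g) * signChar (φ j g) := by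
        simp only [sq, sum_mul_sum]
        rw [sum_comm]
        exact sum_congr rfl fun i _ ↦ sum_comm
    _ = Fintype.card ι * (Fintype.card G : ℤ) := by
        simp [sum_signChar_mul_signChar hφ]

end Moments

/-- The `i`-th coordinate as a functional on the code `B`. The dual code of `B` consists of the
linear relations among these functionals. -/
def coordFunctional {ι : Type*} (B : Submodule (ZMod 2) (ι → ZMod 2)) (i : ι) : B →+ ZMod 2 :=
  (Pi.evalAddMonoidHom _ i).comp B.subtype.toAddMonoidHom

@[simp]
theorem coordFunctional_apply {ι : Type*} (B : Submodule (ZMod 2) (ι → ZMod 2)) (i : ι) (c : B) :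
    coordFunctional B i c = (c : ι → ZMod 2) i :=
  rfl

theorem hammingNorm_single_le_one {ι : Type*} {β : ι → Type*} [Fintype ι] [DecidableEq ι]
    [∀ i, Zero (β i)] [∀ i, DecidableEq (β i)] (i : ι) (a : β i) :
    hammingNorm (Pi.single i a) ≤ 1 := by
  refine (card_le_card (t := {i}) fun j hj ↦ ?_).trans_eq (card_singleton i)
  by_contra hji
  simp_all

section Code

variable {n d : ℕ} {B : Submodule (ZMod 2) (Fin n → ZMod 2)}

theorem HasMinWeight.le_hammingNorm {S : Set (Fin n → ZMod 2)} (hS : HasMinWeight S d)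
    {x : Fin n → ZMod 2} (hx : x ∈ S) (hx0 : x ≠ 0) : d ≤ hammingNorm x :=
  hS.2 ⟨x, hx, hx0, rfl⟩

theorem coordFunctional_ne_zero (hB : HasMinWeight (dualCode B) d) (hd : 2 ≤ d) (i : Fin n) :
    coordFunctional B i ≠ 0 := by
  intro hi
  have hdual : Pi.single i 1 ∈ dualCode B := fun y hy ↦ by
    simpa [Pi.single_apply] using DFunLike.congr_fun hi ⟨y, hy⟩
  have hle := hB.le_hammingNorm hdual (by simp)
  have hone := hammingNorm_single_le_one (β := fun _ ↦ ZMod 2) i 1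
  omega

theorem coordFunctional_injective (hB : HasMinWeight (dualCode B) d) (hd : 3 ≤ d) :
    Function.Injective (coordFunctional B) := by
  intro i j hij
  by_contra hne
  let e (k : Fin n) : Fin n → ZMod 2 := Pi.single k 1
  have hdual : -e i + e j ∈ dualCode B := fun y hy ↦ by
    simpa [e, Pi.single_apply, CharTwo.neg_eq, add_mul, sum_add_distrib, CharTwo.add_eq_zero]
      using DFunLike.congr_fun hij ⟨y, hy⟩
  have hle : d ≤ hammingDist (e i) (e j) := by
    rw [hammingDist_eq_hammingNorm]
    refine hB.le_hammingNorm hdual fun h ↦ ?_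
    simpa [e, hne] using congrFun h i
  have htri := hammingDist_triangle_right (e i) (e j) 0
  have hone (k : Fin n) : hammingDist (e k) 0 ≤ 1 := by
    rw [hammingDist_zero_right]
    exact hammingNorm_single_le_one k 1
  have := hone i
  have := hone j
  omega

theorem sum_length_sub_two_mul_hammingNorm [Fintype B] (hB : HasMinWeight (dualCode B) d)
    (hd : 2 ≤ d) : ∑ c : B, ((n : ℤ) - 2 * hammingNorm (c : Fin n → ZMod 2)) = 0 := by
  have h := sum_sum_signChar_eq_zero (coordFunctional_ne_zero hB hd)
  simpa [sum_signChar_eq_card_sub] using h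

theorem sum_sq_length_sub_two_mul_hammingNorm [Fintype B] (hB : HasMinWeight (dualCode B) d)
    (hd : 3 ≤ d) :
    ∑ c : B, ((n : ℤ) - 2 * hammingNorm (c : Fin n → ZMod 2)) ^ 2 =
      (n : ℤ) * Fintype.card B := by
  have h := sum_sq_sum_signChar (coordFunctional_injective hB hd)
  simpa [sum_signChar_eq_card_sub] using h

theorem sum_sub_mul_sub_hammingNorm [Fintype B] (hB : HasMinWeight (dualCode B) d) (hd : 3 ≤ d)
    (a b : ℤ) :
    ∑ c : B, ((n - 2 * hammingNorm (c : Fin n → ZMod 2) - a) *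
      (n - 2 * hammingNorm (c : Fin n → ZMod 2) - b)) = (n + a * b) * Fintype.card B := by
  have hfirst := sum_length_sub_two_mul_hammingNorm hB (by omega)
  have hsecond := sum_sq_length_sub_two_mul_hammingNorm hB hd
  have hexpand (s : ℤ) : (s - a) * (s - b) = s ^ 2 - (a + b) * s + a * b := by ring
  simp only [hexpand, sum_add_distrib, sum_sub_distrib, ← mul_sum, hfirst, hsecond, sum_const,
    card_univ, nsmul_eq_mul]
  ring

theorem weightCount_eq_card [Fintype B] (w : ℕ) :
    weightCount (B : Set (Fin n → ZMod 2)) w = #{c : B | hammingNorm (c : Fin n → ZMod 2) = w} := by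
  rw [weightCount, ← Set.ncard_coe_finset, ← Set.ncard_image_of_injective _ Subtype.val_injective]
  congr 1
  ext c
  simp [and_comm]

theorem weightCount_zero (B : Submodule (ZMod 2) (Fin n → ZMod 2)) :
    weightCount (B : Set (Fin n → ZMod 2)) 0 = 1 := by
  rw [weightCount, Set.ncard_eq_one]
  refine ⟨0, ?_⟩
  ext c
  simp +contextual

theorem IsDoublyEven.weightCount_eq (hB : IsDoublyEven B) {f : ℕ → ℕ}
    (hsupp : ∀ w, f w ≠ 0 → 4 ∣ w ∧ w ≤ n)
    (hf : ∀ k, 4 * k ≤ n → weightCount (B : Set (Fin n → ZMod 2)) (4 * k) = f (4 * k)) (w : ℕ) :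
    weightCount (B : Set (Fin n → ZMod 2)) w = f w := by
  by_cases hw : 4 ∣ w ∧ w ≤ n
  · obtain ⟨⟨k, rfl⟩, hk⟩ := hw
    exact hf k hk
  · have hempty : {c ∈ (B : Set (Fin n → ZMod 2)) | hammingNorm c = w} = ∅ := by
      refine Set.eq_empty_of_forall_notMem fun c ⟨hc, hcw⟩ ↦ hw ?_
      rw [← hcw]
      exact ⟨hB c hc, by simpa using hammingNorm_le_card_fintype (x := c)⟩
    rw [weightCount, hempty, Set.ncard_empty, not_not.1 (mt (hsupp w) hw)]

theorem IsDoublyEven.sum_hammingNorm [Fintype B] (hB : IsDoublyEven B) {M : Type*}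
    [AddCommMonoid M] (f : ℕ → M) :
    ∑ c : B, f (hammingNorm (c : Fin n → ZMod 2)) =
      ∑ k ∈ range (n / 4 + 1), weightCount (B : Set (Fin n → ZMod 2)) (4 * k) • f (4 * k) := by
  have hmaps (c : B) (_ : c ∈ univ) :
      hammingNorm (c : Fin n → ZMod 2) ∈ (range (n / 4 + 1)).image (4 * ·) := by
    obtain ⟨k, hk⟩ := hB c c.2
    have hle : hammingNorm (c : Fin n → ZMod 2) ≤ n := by
      simpa using hammingNorm_le_card_fintype (x := (c : Fin n → ZMod 2))
    exact mem_image.2 ⟨k, mem_range.2 (by omega), hk.symm⟩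
  rw [← sum_fiberwise_of_maps_to' hmaps, sum_image (by simp)]
  simp [weightCount_eq_card]

end Code

theorem weight_distribution_of_moments {A : ℕ → ℕ} (hzero : A 0 = 1)
    (hcount : ∑ k ∈ range 10, A (4 * k) = 64)
    (hfirst : ∑ k ∈ range 10, A (4 * k) • ((37 : ℤ) - 2 * (4 * k : ℕ)) = 0)
    (hexcess : ∑ k ∈ range 10,
      A (4 * k) • (((37 : ℤ) - 2 * (4 * k : ℕ) - 5) * (37 - 2 * (4 * k : ℕ) - -3)) = 22 * 64) :
    (∀ k < 10, A (4 * k) = if 4 * k = 0 then 1 else if 4 * k = 16 then 20 else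
        if 4 * k = 20 then 42 else if 4 * k = 24 then 1 else 0) ∨
    (∀ k < 10, A (4 * k) = if 4 * k = 0 then 1 else if 4 * k = 12 then 1 else
        if 4 * k = 16 then 17 else if 4 * k = 20 then 45 else 0) := by
  norm_num [sum_range_succ, hzero] at hcount hfirst hexcess
  obtain ⟨h4, h8, h28, h32, h36⟩ : A 4 = 0 ∧ A 8 = 0 ∧ A 28 = 0 ∧ A 32 = 0 ∧ A 36 = 0 := by
    omega
  obtain ⟨h12, h24⟩ | ⟨h12, h24⟩ : A 12 = 0 ∧ A 24 = 1 ∨ A 12 = 1 ∧ A 24 = 0 := by omega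
  · obtain ⟨h16, h20⟩ : A 16 = 20 ∧ A 20 = 42 := by omega
    left
    intro k hk
    interval_cases k <;> simp [*]
  · obtain ⟨h16, h20⟩ : A 16 = 17 ∧ A 20 = 45 := by omega
    right
    intro k hk
    interval_cases k <;> simp [*]

theorem weight_enumerator_37_6 {B : Submodule (ZMod 2) (Fin 37 → ZMod 2)}
    (hdim : Module.finrank (ZMod 2) B = 6)
    (hde : IsDoublyEven B)
    (hdual : HasMinWeight (dualCode B) 3) :
    (∀ w : ℕ, weightCount (B : Set (Fin 37 → ZMod 2)) w =
      if w = 0 then 1 else if w = 16 then 20 else if w = 20 then 42 else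
        if w = 24 then 1 else 0) ∨
    (∀ w : ℕ, weightCount (B : Set (Fin 37 → ZMod 2)) w =
      if w = 0 then 1 else if w = 12 then 1 else if w = 16 then 17 else
        if w = 20 then 45 else 0) := by
  have := Fintype.ofFinite B
  have hcard : Fintype.card B = 64 := by
    simpa [hdim] using Module.card_eq_pow_finrank (K := ZMod 2) (V := B)
  have hcount := hde.sum_hammingNorm fun _ ↦ 1
  have hfirst := sum_length_sub_two_mul_hammingNorm hdual (by norm_num)
  -- `37 - 2 * w` takes the values `5` and `-3` at the weights `16` and `20`.
  have hexcess := sum_sub_mul_sub_hammingNorm hdual le_rfl 5 (-3)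
  rw [hde.sum_hammingNorm fun w ↦ ((37 : ℕ) : ℤ) - 2 * w] at hfirst
  rw [hde.sum_hammingNorm fun w ↦ (((37 : ℕ) : ℤ) - 2 * w - 5) * ((37 : ℕ) - 2 * w - -3),
    hcard] at hexcess
  refine (weight_distribution_of_moments (weightCount_zero B)
    (by simpa [hcard] using hcount.symm) hfirst hexcess).imp (fun h ↦ ?_) fun h ↦ ?_
  all_goals
    refine hde.weightCount_eq (fun w hw ↦ ?_) fun k hk ↦ h k (by omega)
    split_ifs at hw <;> omega
end
end
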